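/- There exists a function f : ℕ × ℕ → ℕ such that for all natural numbers n and m ≥ 1 the following holds: if G is a group satisfying g^m = 1 for every g ∈ G (exponent at most m) and α is an automorphism of G with α ∘ α = id such that Fix(α) has at most n elements, then the subgroup [G,α] has index at most n in G and the derived subgroup of [G,α] has order at most f(n,m). -/

import Mathlib

/-!
The displacement `g⁻¹ * α g` determines `g` up to a left factor in the finite group of fixed
points, and `α` inverts every displacement. Call a property generic if its exceptions lie in
finitely many cosets of subgroups of infinite index; by B. H. Neumann's covering lemma, generic
properties are satisfiable. Halving the exponent repeatedly gives a finite normal subgroup `W` such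
that generic displacements have odd order modulo `W`. Hence a generic element is a product of one
of finitely many elements and an element inverted by `α`, which forces the FC-centre to have finite
index. As `G` is torsion, it is therefore locally finite, and it suffices to bound the index and
the derived subgroup in finite `α`-invariant subgroups by the number `n` of fixed points.

In a finite group the set of displacements has density at least `1 / n`, and its translates by `x`
and `y` have at most as many common points as the centralizer of `x⁻¹ * y` has elements. So the
elements with a centralizer of small index generate a characteristic subgroup `F` of index at most
`2 * n` with boundedly many conjugates of each element; by Neumann's theorem on BFC-groups, `⁅F, F⁆`
has bounded order. Modulo `⁅F, F⁆` the subgroup `F` is commutative, so `α` inverts a subgroup of it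
of bounded index. The normal core of that subgroup centralizes `[G, α]`, and a second application
of Neumann's theorem bounds the derived subgroup of `[G, α]`.
-/

open Filter Pointwise
open scoped IsMulCommutative commutatorElement

section GenericElements

variable {G : Type*} [Group G]

/-- The filter of generic sets of a group: a property holds for generic elements if the exceptions
are covered by finitely many left cosets of subgroups of infinite index. -/
def genericFilter (G : Type*) [Group G] : Filter G :=
  generate {s | ∃ (g : G) (H : Subgroup G), ¬ H.FiniteIndex ∧ s = (g • (H : Set G))ᶜ}

instance genericFilter_neBot : (genericFilter G).NeBot := by
  refine generate_neBot_iff.2 fun t ht ht_fin => ?_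
  choose! g H hH hs using fun (s : Set G) (hs : s ∈ t) => ht hs
  by_contra! h_empty
  have h_cover : ⋃ s ∈ ht_fin.toFinset, g s • (H s : Set G) = Set.univ := by
    refine Set.eq_univ_of_forall fun x => ?_
    obtain ⟨s, hst, hxs⟩ : ∃ s ∈ t, x ∉ s := by
      simpa using Set.eq_empty_iff_forall_notMem.1 h_empty x
    rw [hs s hst, Set.notMem_compl_iff] at hxs
    exact Set.mem_biUnion (by simpa using hst) hxs
  obtain ⟨s, hst, hs_fin⟩ := Subgroup.exists_finiteIndex_of_leftCoset_cover h_cover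
  exact hH s (ht_fin.mem_toFinset.1 hst) hs_fin

lemma eventually_inv_mul_notMem {H : Subgroup G} (hH : ¬ H.FiniteIndex) (a : G) :
    ∀ᶠ g in genericFilter G, a⁻¹ * g ∉ H :=
  mem_of_superset (mem_generate_of_mem ⟨a, H, hH, rfl⟩) fun g hg => by
    rwa [Set.mem_compl_iff, mem_leftCoset_iff] at hg

lemma tendsto_mul_left_genericFilter (a : G) :
    Tendsto (a * ·) (genericFilter G) (genericFilter G) := by
  refine le_generate_iff.2 ?_
  rintro _ ⟨b, H, hH, rfl⟩
  refine mem_map'.2 ?_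
  filter_upwards [eventually_inv_mul_notMem hH (a⁻¹ * b)] with g hg
  simpa [mem_leftCoset_iff, mul_assoc] using hg

lemma conj_eq_conj_iff_mem_centralizer {a b x : G} :
    a * x * a⁻¹ = b * x * b⁻¹ ↔ a⁻¹ * b ∈ Subgroup.centralizer {x} := by
  rw [Subgroup.mem_centralizer_singleton_iff, eq_mul_inv_iff_mul_eq, ← mul_right_inj a⁻¹, eq_comm]
  simp only [mul_assoc, inv_mul_cancel_left]

lemma eventually_conj_ne {x : G} (hx : ¬ (Subgroup.centralizer {x}).FiniteIndex) (y : G) :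
    ∀ᶠ g in genericFilter G, g * x * g⁻¹ ≠ y := by
  by_cases hy : ∃ a, a * x * a⁻¹ = y
  · obtain ⟨a, rfl⟩ := hy
    filter_upwards [eventually_inv_mul_notMem hx a] with g hg
    rwa [ne_comm, Ne, conj_eq_conj_iff_mem_centralizer]
  · exact Eventually.of_forall (not_exists.1 hy)

end GenericElements

section FCCenter

variable {G : Type*} [Group G]

lemma index_centralizer_eq_ncard_conjugatesOf (a : G) :
    (Subgroup.centralizer {a}).index = (conjugatesOf a).ncard := by
  rw [Subgroup.centralizer_eq_comap_stabilizer]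
  refine (Subgroup.index_comap_of_surjective _ ConjAct.toConjAct.surjective).trans ?_
  rw [MulAction.index_stabilizer]
  congr 1
  ext b
  rw [ConjAct.mem_orbit_conjAct, isConj_comm]
  exact Iff.rfl

lemma ncard_conjugatesOf_pos {a : G} (ha : (conjugatesOf a).Finite) : 0 < (conjugatesOf a).ncard :=
  (Set.ncard_pos ha).2 ⟨a, mem_conjugatesOf_self⟩

lemma finite_conjugatesOf_iff {a : G} :
    (conjugatesOf a).Finite ↔ (Subgroup.centralizer {a}).FiniteIndex := by
  refine ⟨fun h => ⟨?_⟩, fun h => Set.finite_of_ncard_ne_zero ?_⟩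
  · rw [index_centralizer_eq_ncard_conjugatesOf]
    exact (ncard_conjugatesOf_pos h).ne'
  · rw [← index_centralizer_eq_ncard_conjugatesOf]
    exact h.index_ne_zero

lemma centralizer_inf_centralizer_le_centralizer_mul (a b : G) :
    Subgroup.centralizer {a} ⊓ Subgroup.centralizer {b} ≤ Subgroup.centralizer {a * b} := by
  intro c hc
  rw [Subgroup.mem_inf] at hc
  simp only [Subgroup.mem_centralizer_singleton_iff] at hc ⊢
  exact Commute.mul_right (a := c) hc.1 hc.2

lemma centralizer_singleton_inv (a : G) :
    Subgroup.centralizer {a⁻¹} = Subgroup.centralizer {a} := by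
  ext c
  simp only [Subgroup.mem_centralizer_singleton_iff]
  exact Commute.inv_right_iff (a := c)

lemma conjugatesOf_conj (a g : G) : conjugatesOf (g * a * g⁻¹) = conjugatesOf a :=
  (isConj_iff.2 ⟨g, rfl⟩ : IsConj a _).conjugatesOf_eq.symm

/-- The FC-centre of a group: the subgroup of the elements with finitely many conjugates,
that is, with a centralizer of finite index. -/
def fcCenter (G : Type*) [Group G] : Subgroup G where
  carrier := {a | (Subgroup.centralizer {a}).FiniteIndex}
  one_mem' := Subgroup.finiteIndex_of_le (H := ⊤) fun _ _ => by
    simp [Subgroup.mem_centralizer_singleton_iff]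
  mul_mem' {a b} (ha : (Subgroup.centralizer {a}).FiniteIndex)
      (hb : (Subgroup.centralizer {b}).FiniteIndex) :=
    Subgroup.finiteIndex_of_le (centralizer_inf_centralizer_le_centralizer_mul a b)
  inv_mem' {a} ha := by rwa [Set.mem_ofPred_eq, centralizer_singleton_inv]

lemma mem_fcCenter {a : G} : a ∈ fcCenter G ↔ (Subgroup.centralizer {a}).FiniteIndex :=
  Iff.rfl

instance fcCenter_normal : (fcCenter G).Normal where
  conj_mem a ha g := by
    rwa [mem_fcCenter, ← finite_conjugatesOf_iff, conjugatesOf_conj, finite_conjugatesOf_iff]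

lemma finite_conjugatesOfSet {s : Set G} (hs : s.Finite) (hs_fc : s ⊆ fcCenter G) :
    (Group.conjugatesOfSet s).Finite :=
  hs.biUnion fun _ ha => finite_conjugatesOf_iff.2 (hs_fc ha)

lemma centralizer_subgroupOf_le {K : Subgroup G} (a : K) :
    (Subgroup.centralizer {(a : G)}).subgroupOf K ≤ Subgroup.centralizer {a} := by
  intro b hb
  rw [Subgroup.mem_subgroupOf, Subgroup.mem_centralizer_singleton_iff] at hb
  exact Subgroup.mem_centralizer_singleton_iff.2 (Subtype.ext hb)

lemma fcCenter_eq_top_of_le {K : Subgroup G} (hK : K ≤ fcCenter G) : fcCenter K = ⊤ := by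
  refine (Subgroup.eq_top_iff' _).2 fun a => ?_
  have : (Subgroup.centralizer {(a : G)}).FiniteIndex := hK a.2
  exact Subgroup.finiteIndex_of_le (centralizer_subgroupOf_le a)

lemma finite_of_fg_of_fcCenter_eq_top [hG_fg : Group.FG G] (hG : IsMulTorsion G)
    (h_top : fcCenter G = ⊤) : Finite G := by
  obtain ⟨s, hs⟩ := hG_fg.out
  have : (Subgroup.center G).FiniteIndex := by
    rw [Subgroup.center_eq_infi' hs]
    exact Subgroup.finiteIndex_iInf fun a => mem_fcCenter.1 (h_top ▸ Subgroup.mem_top _)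
  have : Group.FG (Subgroup.center G) := Subgroup.fg_of_index_ne_zero _
  have : Finite (Subgroup.center G) := CommGroup.finite_of_fg_isMulTorsion _ (hG.subgroup _)
  exact Finite.of_subgroup_quotient (Subgroup.center G)

lemma finite_of_fg_of_le_fcCenter (hG : IsMulTorsion G) {K : Subgroup G} (hK : K.FG)
    (hK_fc : K ≤ fcCenter G) : Finite K :=
  have : Group.FG K := (Group.fg_iff_subgroup_fg K).2 hK
  finite_of_fg_of_fcCenter_eq_top (hG.subgroup K) (fcCenter_eq_top_of_le hK_fc)

/-- Dietzmann's lemma. -/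
lemma finite_normalClosure (hG : IsMulTorsion G) {s : Set G} (hs : s.Finite)
    (hs_fc : s ⊆ fcCenter G) : Finite (Subgroup.normalClosure s) :=
  finite_of_fg_of_le_fcCenter hG
    ((Subgroup.fg_iff _).2 ⟨_, rfl, finite_conjugatesOfSet hs hs_fc⟩)
    (Subgroup.normalClosure_le_normal hs_fc)

lemma finite_of_fg_of_finiteIndex_fcCenter [Group.FG G] [(fcCenter G).FiniteIndex]
    (hG : IsMulTorsion G) : Finite G := by
  have : Group.FG (fcCenter G) := Subgroup.fg_of_index_ne_zero _
  have : Finite (fcCenter G) :=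
    finite_of_fg_of_le_fcCenter hG ((Group.fg_iff_subgroup_fg _).1 this) le_rfl
  exact Finite.of_subgroup_quotient (fcCenter G)

end FCCenter

section Displacement

variable {G : Type*} [Group G] {α : G →* G}

/-- The displacement `[g, α] = g⁻¹ * α g` of an element `g` under an endomorphism `α`. -/
def displacement (α : G →* G) (g : G) : G := g⁻¹ * α g

/-- The subgroup `[H, α]` generated by the displacements of the elements of `H`. -/
def autCommutator (α : G →* G) (H : Subgroup G) : Subgroup G :=
  Subgroup.closure (displacement α '' H)

lemma mul_displacement (α : G →* G) (g : G) : g * displacement α g = α g :=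
  mul_inv_cancel_left g (α g)

lemma displacement_mem_autCommutator (α : G →* G) {H : Subgroup G} {g : G} (hg : g ∈ H) :
    displacement α g ∈ autCommutator α H :=
  Subgroup.subset_closure (Set.mem_image_of_mem _ hg)

lemma displacement_eq_iff {a b : G} :
    displacement α a = displacement α b ↔ a * b⁻¹ ∈ Function.fixedPoints α := by
  rw [Function.mem_fixedPoints_iff, map_mul, map_inv, mul_inv_eq_iff_eq_mul, mul_assoc,
    ← inv_mul_eq_iff_eq_mul]
  exact Iff.rfl

lemma map_displacement (hα : Function.Involutive α) (g : G) :
    α (displacement α g) = (displacement α g)⁻¹ := by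
  simp [displacement, hα g]

lemma displacement_of_inverted {y : G} (hy : α y = y⁻¹) : displacement α y = (y ^ 2)⁻¹ := by
  rw [displacement, hy, sq, mul_inv_rev]

lemma displacement_conj {g y : G} (hy : α y = y⁻¹) (hgy : Commute (displacement α g) y) :
    displacement α (g * y * g⁻¹) = g * displacement α y * g⁻¹ := by
  have h_comm : displacement α g * y⁻¹ * (displacement α g)⁻¹ = y⁻¹ := by
    rw [hgy.inv_right.eq, mul_inv_cancel_right]
  calc displacement α (g * y * g⁻¹)
      = g * y⁻¹ * (displacement α g * y⁻¹ * (displacement α g)⁻¹) * g⁻¹ := by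
        simp only [displacement, map_mul, map_inv, hy]; group
    _ = g * displacement α y * g⁻¹ := by
        rw [h_comm, displacement, hy]; group

lemma exists_displacement_preimage_subset (α : G →* G) {W : Set G} (hW : W.Finite) :
    ∃ t : Set G, t.Finite ∧ t.ncard ≤ W.ncard ∧
      displacement α ⁻¹' W ⊆ Function.fixedPoints α * t := by
  obtain ⟨t, -, ht⟩ := Set.exists_subset_bijOn (displacement α ⁻¹' W) (displacement α)
  have h_maps : Set.MapsTo (displacement α) t W :=
    ht.mapsTo.mono_right (Set.image_preimage_subset _ _)
  refine ⟨t, Set.Finite.of_injOn h_maps ht.injOn hW,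
    Set.ncard_le_ncard_of_injOn _ h_maps ht.injOn hW, fun g hg => ?_⟩
  obtain ⟨x, hx, hgx⟩ := ht.surjOn (Set.mem_image_of_mem _ hg)
  exact ⟨g * x⁻¹, displacement_eq_iff.1 hgx.symm, x, hx, inv_mul_cancel_right g x⟩

lemma finite_preimage_displacement (h_fix : (Function.fixedPoints α).Finite) {W : Set G}
    (hW : W.Finite) : (displacement α ⁻¹' W).Finite :=
  have ⟨_, ht, _, h_sub⟩ := exists_displacement_preimage_subset α hW
  (h_fix.mul ht).subset h_sub

lemma ncard_preimage_displacement_le (h_fix : (Function.fixedPoints α).Finite) {W : Set G}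
    (hW : W.Finite) :
    (displacement α ⁻¹' W).ncard ≤ (Function.fixedPoints α).ncard * W.ncard := by
  obtain ⟨t, ht, ht_card, h_sub⟩ := exists_displacement_preimage_subset α hW
  calc (displacement α ⁻¹' W).ncard
      ≤ (Function.fixedPoints α * t).ncard := Set.ncard_le_ncard h_sub (h_fix.mul ht)
    _ ≤ (Function.fixedPoints α).ncard * t.ncard := Set.natCard_mul_le
    _ ≤ (Function.fixedPoints α).ncard * W.ncard := Nat.mul_le_mul_left _ ht_card

lemma map_autCommutator {G' : Type*} [Group G'] {β : G' →* G'} {f : G →* G'}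
    (hf : ∀ g, f (α g) = β (f g)) (H : Subgroup G) :
    (autCommutator α H).map f = autCommutator β (H.map f) := by
  rw [autCommutator, autCommutator, MonoidHom.map_closure, Subgroup.coe_map, Set.image_image,
    Set.image_image]
  simp only [displacement, map_mul, map_inv, hf]

end Displacement

section FCCenterFiniteIndex

variable {G : Type*} [Group G] {α : G →* G}

/-- If `α` inverts `y` and `displacement α g` commutes with `y`, then `y` and `g * y * g⁻¹` both lie
in the finite set of elements with displacement in `W`. For generic `g` this is possible only if `y`
has finitely many conjugates. -/
lemma exists_finite_normal_eventually_mem_of_sq_mem (hG : IsMulTorsion G)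
    (h_fix : (Function.fixedPoints α).Finite) (W : Subgroup G) [W.Normal] [Finite W] :
    ∃ W' : Subgroup G, W'.Normal ∧ Finite W' ∧ ∀ᶠ g in genericFilter G, ∀ y,
      Commute (displacement α g) y → α y = y⁻¹ → y ^ 2 ∈ W → y ∈ W' := by
  set A : Set G := displacement α ⁻¹' W
  have hA : A.Finite := finite_preimage_displacement h_fix (Set.toFinite (W : Set G))
  refine ⟨Subgroup.normalClosure (A ∩ fcCenter G), inferInstance,
    finite_normalClosure hG (hA.inter_of_left _) Set.inter_subset_right, ?_⟩
  have h_generic : ∀ᶠ g in genericFilter G, ∀ y ∈ A \ fcCenter G, ∀ z ∈ A, g * y * g⁻¹ ≠ z :=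
    (eventually_all_finite hA.sdiff).2 fun y hy =>
      (eventually_all_finite hA).2 fun z _ => eventually_conj_ne hy.2 z
  filter_upwards [h_generic] with g hg y hgy hy hyW
  have hyA : displacement α y ∈ W := by
    rw [displacement_of_inverted hy]
    exact W.inv_mem hyW
  have hyA' : displacement α (g * y * g⁻¹) ∈ W := by
    rw [displacement_conj hy hgy]
    exact Subgroup.Normal.conj_mem ‹_› _ hyA g
  have hy_fc : y ∈ fcCenter G := by
    by_contra hy_fc
    exact hg y ⟨hyA, hy_fc⟩ _ hyA' rfl
  exact Subgroup.subset_normalClosure ⟨hyA, hy_fc⟩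

lemma exists_finite_normal_eventually_odd_pow_mem (hG : IsMulTorsion G)
    (hα : Function.Involutive α) (h_fix : (Function.fixedPoints α).Finite) {e : ℕ}
    (h_exp : ∀ g : G, ∃ q, Odd q ∧ g ^ (2 ^ e * q) = 1) :
    ∃ W : Subgroup G, W.Normal ∧ Finite W ∧
      ∀ᶠ g in genericFilter G, ∃ q, Odd q ∧ displacement α g ^ q ∈ W := by
  suffices h_descent : ∀ k ≤ e, ∃ W : Subgroup G, W.Normal ∧ Finite W ∧
      ∀ᶠ g in genericFilter G, ∃ q, Odd q ∧ displacement α g ^ (2 ^ k * q) ∈ W by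
    simpa using h_descent 0 e.zero_le
  intro k hk
  induction hk using Nat.decreasingInduction with
  | self =>
    exact ⟨⊥, inferInstance, inferInstance,
      Eventually.of_forall fun g => by simpa using h_exp (displacement α g)⟩
  | of_succ k _ ih =>
    obtain ⟨W, _, _, hW⟩ := ih
    obtain ⟨W', hW'_normal, hW'_fin, hW'⟩ :=
      exists_finite_normal_eventually_mem_of_sq_mem hG h_fix W
    refine ⟨W', hW'_normal, hW'_fin, ?_⟩
    filter_upwards [hW, hW'] with g ⟨q, hq, hgq⟩ hg
    refine ⟨q, hq, hg _ (Commute.self_pow _ _) ?_ ?_⟩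
    · rw [map_pow, map_displacement hα, inv_pow]
    · rwa [← pow_mul, mul_right_comm, ← pow_succ]

lemma exists_mul_inverted_eq (hα : Function.Involutive α) {W : Subgroup G} {g : G} {q : ℕ}
    (hq : Odd q) (hgq : displacement α g ^ q ∈ W) :
    ∃ b ∈ displacement α ⁻¹' W, ∃ s, α s = s⁻¹ ∧ b * s = g := by
  obtain ⟨r, rfl⟩ := hq
  have h_map := map_displacement hα g
  have h_mul := mul_displacement α g
  set x := displacement α g
  refine ⟨g * x ^ (r + 1), ?_, (x ^ (r + 1))⁻¹, ?_, mul_inv_cancel_right _ _⟩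
  · have h_disp : displacement α (g * x ^ (r + 1)) = (x ^ (2 * r + 1))⁻¹ := by
      rw [displacement, map_mul, map_pow, h_map, ← h_mul]
      group
    rw [Set.mem_preimage, h_disp]
    exact W.inv_mem hgq
  · rw [map_inv, map_pow, h_map, inv_pow]

/-- If `α` inverts `x`, `y` and `s`, and `x * y = b * s`, then `y` conjugates `x * α b` to
`b⁻¹ * x`. So if no `x * α b` were in the FC-centre, generic elements would not be inverted
by `α`. -/
lemma exists_mul_map_mem_fcCenter {B : Set G} (hB : B.Finite)
    (h_gen : ∀ᶠ g in genericFilter G, ∃ b ∈ B, ∃ s, α s = s⁻¹ ∧ b * s = g) {x : G}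
    (hx : α x = x⁻¹) : ∃ b ∈ B, x * α b ∈ fcCenter G := by
  by_contra! h_notMem
  have h_not_inverted : ∀ᶠ y in genericFilter G, α y ≠ y⁻¹ := by
    have h_conj : ∀ᶠ y in genericFilter G, ∀ b ∈ B, y * (x * α b) * y⁻¹ ≠ b⁻¹ * x :=
      (eventually_all_finite hB).2 fun b hb => eventually_conj_ne (h_notMem b hb) _
    filter_upwards [h_conj, (tendsto_mul_left_genericFilter x).eventually h_gen]
      with y hy ⟨b, hb, s, hs, h_eq⟩ hy_inv
    refine hy b hb ?_
    have h_map : α b = x⁻¹ * y⁻¹ * s := by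
      rw [← hx, ← hy_inv, ← map_mul, ← h_eq, map_mul, hs, inv_mul_cancel_right]
    calc y * (x * α b) * y⁻¹ = s * y⁻¹ := by rw [h_map]; group
      _ = b⁻¹ * x := by rw [eq_inv_mul_of_mul_eq h_eq]; group
  have h_contra : ∀ᶠ g in genericFilter G, ∀ b ∈ B, α (b⁻¹ * g) ≠ (b⁻¹ * g)⁻¹ :=
    (eventually_all_finite hB).2 fun b _ =>
      (tendsto_mul_left_genericFilter b⁻¹).eventually h_not_inverted
  obtain ⟨g, hg, b, hb, s, hs, rfl⟩ := (h_contra.and h_gen).exists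
  exact hg b hb (by rwa [inv_mul_cancel_left])

lemma finiteIndex_fcCenter_of_eventually {B : Set G} (hB : B.Finite)
    (h_gen : ∀ᶠ g in genericFilter G, ∃ b ∈ B, ∃ s, α s = s⁻¹ ∧ b * s = g) :
    (fcCenter G).FiniteIndex := by
  by_contra h_infinite
  have h_cosets : ∀ᶠ g in genericFilter G,
      ∀ b ∈ B, ∀ c ∈ B, (b * (α c)⁻¹)⁻¹ * g ∉ fcCenter G :=
    (eventually_all_finite hB).2 fun b _ => (eventually_all_finite hB).2 fun c _ =>
      eventually_inv_mul_notMem h_infinite _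
  obtain ⟨g, hg, b, hb, s, hs, rfl⟩ := (h_cosets.and h_gen).exists
  obtain ⟨c, hc, hsc⟩ := exists_mul_map_mem_fcCenter hB h_gen hs
  refine hg b hb c hc ?_
  convert fcCenter_normal.conj_mem _ hsc (α c) using 1
  group

lemma isMulTorsion_of_odd {e : ℕ} (h_exp : ∀ g : G, ∃ q, Odd q ∧ g ^ (2 ^ e * q) = 1) :
    IsMulTorsion G := fun g => by
  obtain ⟨q, hq, hgq⟩ := h_exp g
  exact isOfFinOrder_iff_pow_eq_one.2 ⟨2 ^ e * q, Nat.mul_pos (by positivity) hq.pos, hgq⟩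

theorem finiteIndex_fcCenter (hα : Function.Involutive α)
    (h_fix : (Function.fixedPoints α).Finite) {e : ℕ}
    (h_exp : ∀ g : G, ∃ q, Odd q ∧ g ^ (2 ^ e * q) = 1) : (fcCenter G).FiniteIndex := by
  have hG : IsMulTorsion G := isMulTorsion_of_odd h_exp
  obtain ⟨W, _, _, hW⟩ := exists_finite_normal_eventually_odd_pow_mem hG hα h_fix h_exp
  refine finiteIndex_fcCenter_of_eventually (α := α)
    (finite_preimage_displacement h_fix (Set.toFinite (W : Set G))) ?_
  filter_upwards [hW] with g ⟨q, hq, hgq⟩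
  exact exists_mul_inverted_eq hα hq hgq

end FCCenterFiniteIndex

section SeparatedSets

open Finset

/-- A Bonferroni inequality. -/
lemma sum_card_le_card_biUnion_add {ι β : Type*} [DecidableEq β] (P : Finset ι)
    (A : ι → Finset β) {c : ℕ} (hc : (P : Set ι).Pairwise fun i j => #(A i ∩ A j) ≤ c) :
    ∑ i ∈ P, #(A i) ≤ #(P.biUnion A) + (#P).choose 2 * c := by
  classical
  induction P using Finset.induction_on with
  | empty => simp
  | insert i P hi ih =>
    rw [coe_insert, Set.pairwise_insert_of_notMem (mod_cast hi)] at hc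
    have h_inter : #(A i ∩ P.biUnion A) ≤ #P * c := by
      rw [inter_biUnion]
      exact card_biUnion_le_card_mul _ _ _ fun j hj => (hc.2 j hj).1
    have h_union := card_union_add_card_inter (A i) (P.biUnion A)
    rw [sum_insert hi, biUnion_insert, card_insert_of_notMem hi, Nat.choose_succ_succ',
      Nat.choose_one_right, add_mul]
    have := ih hc.1
    lia

lemma card_lt_of_pairwise_card_inter_le {ι β : Type*} [Fintype β] [DecidableEq β] [Nonempty β]
    {P : Finset ι} {A : ι → Finset β} {n : ℕ} (hn : 0 < n)
    (h_card : ∀ i ∈ P, Fintype.card β ≤ n * #(A i))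
    (h_inter : (P : Set ι).Pairwise fun i j => 2 * n ^ 2 * #(A i ∩ A j) ≤ Fintype.card β) :
    #P < 2 * n := by
  classical
  by_contra! h_le
  obtain ⟨Q, hQP, hQ⟩ := exists_subset_card_eq h_le
  have h_bonferroni := sum_card_le_card_biUnion_add Q A (c := Fintype.card β / (2 * n ^ 2))
    fun i hi j hj hij => (Nat.le_div_iff_mul_le (by positivity)).2 <| by
      rw [mul_comm]; exact h_inter (hQP hi) (hQP hj) hij
  have h_sum : 2 * n * Fintype.card β ≤ n * ∑ i ∈ Q, #(A i) := by
    rw [mul_sum, ← hQ, ← smul_eq_mul]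
    exact card_nsmul_le_sum _ _ _ fun i hi => h_card i (hQP hi)
  have h_choose : (2 * n).choose 2 = n * (2 * n - 1) := by
    rw [Nat.choose_two_right, mul_assoc, Nat.mul_div_cancel_left _ two_pos]
  have h_union : #(Q.biUnion A) ≤ Fintype.card β := card_le_univ _
  have h_div := Nat.div_mul_le_self (Fintype.card β) (2 * n ^ 2)
  have h_pos : 0 < Fintype.card β := Fintype.card_pos
  rw [hQ, h_choose] at h_bonferroni
  obtain ⟨k, rfl⟩ : ∃ k, n = k + 1 := ⟨n - 1, by lia⟩
  rw [show 2 * (k + 1) - 1 = 2 * k + 1 by lia] at h_bonferroni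
  nlinarith

variable {G : Type*} [Group G]

/-- Having `M` elements, `P` is a maximal `X`-separated set, so `P * X` is the whole group. For `q`
in `P` and `a`, `b` in `X`, the point of `P` close to `q * (a * b)` must be `q` itself, because it
differs from `q` by an element of `X ^ 3`. -/
lemma mul_self_subset_of_maximal_separated {X : Set G} (hX_one : 1 ∈ X) (hX_inv : X⁻¹ = X) {M : ℕ}
    (hM : ∀ P : Finset G, (P : Set G).Pairwise (fun x y => x⁻¹ * y ∉ X) → #P ≤ M)
    {P : Finset G} (hP : (P : Set G).Pairwise fun x y => x⁻¹ * y ∉ X ^ 3) (hPM : M ≤ #P) :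
    X * X ⊆ X := by
  classical
  have hX_sub : X ⊆ X ^ 3 := by simpa using Set.pow_subset_pow_right hX_one (show 1 ≤ 3 by lia)
  have h_max : ∀ g, ∃ p ∈ P, p⁻¹ * g ∈ X := by
    intro g
    by_contra! hg
    have hgP : g ∉ P := fun hgP => hg g hgP (by rwa [inv_mul_cancel])
    have h_sep : ((insert g P : Finset G) : Set G).Pairwise fun x y => x⁻¹ * y ∉ X := by
      rw [coe_insert, Set.pairwise_insert_of_notMem (mod_cast hgP)]
      refine ⟨hP.imp fun x y hxy h => hxy (hX_sub h), fun p hp => ⟨fun h => hg p hp ?_, hg p hp⟩⟩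
      rw [← hX_inv]
      simpa using h
    have := hM _ h_sep
    rw [card_insert_of_notMem hgP] at this
    lia
  obtain ⟨q, hq, -⟩ := h_max 1
  rintro _ ⟨a, ha, b, hb, rfl⟩
  obtain ⟨p, hp, hpq⟩ := h_max (q * (a * b))
  have h_pow : p⁻¹ * q ∈ X ^ 3 := by
    have h_eq : p⁻¹ * q = p⁻¹ * (q * (a * b)) * b⁻¹ * a⁻¹ := by group
    rw [h_eq, pow_succ, pow_two]
    refine Set.mul_mem_mul (Set.mul_mem_mul hpq ?_) ?_ <;> rwa [← Set.mem_inv, hX_inv]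
  obtain rfl : p = q := by_contra fun h_ne => hP hp hq h_ne h_pow
  rwa [inv_mul_cancel_left] at hpq

lemma closure_subset_pow_of_separated {X : Set G} (hX_one : 1 ∈ X) (hX_inv : X⁻¹ = X) {M : ℕ}
    (hM : ∀ P : Finset G, (P : Set G).Pairwise (fun x y => x⁻¹ * y ∉ X) → #P ≤ M) :
    (Subgroup.closure X : Set G) ⊆ X ^ 3 ^ M := by
  induction M generalizing X with
  | zero => simpa using hM {1}
  | succ M ih =>
    by_cases h_sep : ∀ P : Finset G, (P : Set G).Pairwise (fun x y => x⁻¹ * y ∉ X ^ 3) → #P ≤ M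
    · rw [← Subgroup.closure_pow hX_one three_ne_zero, pow_succ' 3 M, pow_mul]
      exact ih (Set.one_mem_pow hX_one) (by rw [← inv_pow, hX_inv]) h_sep
    · push Not at h_sep
      obtain ⟨P, hP, hPM⟩ := h_sep
      have h_mul : X * X ⊆ X := mul_self_subset_of_maximal_separated hX_one hX_inv hM hP hPM
      let H : Subgroup G :=
        { carrier := X
          one_mem' := hX_one
          mul_mem' := fun ha hb => h_mul (Set.mul_mem_mul ha hb)
          inv_mem' := fun ha => by rwa [← Set.mem_inv, hX_inv] }
      have h_closure : Subgroup.closure X ≤ H := (Subgroup.closure_le H).2 subset_rfl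
      have h_pow : X ^ 1 ⊆ X ^ 3 ^ (M + 1) :=
        Set.pow_subset_pow_right hX_one (Nat.one_le_pow (M + 1) 3 three_pos)
      exact Set.Subset.trans h_closure (by rwa [pow_one] at h_pow)

lemma finite_and_natCard_le {β : Type*} {k : ℕ} (h : ∀ s : Finset β, #s ≤ k) :
    Finite β ∧ Nat.card β ≤ k := by
  have : Finite β := by
    by_contra h_inf
    have : Infinite β := not_finite_iff_infinite.1 h_inf
    obtain ⟨s, hs⟩ := Infinite.exists_subset_card_eq β (k + 1)
    have := h s
    lia
  have := Fintype.ofFinite β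
  exact ⟨inferInstance, Nat.card_eq_fintype_card (α := β) ▸ h univ⟩

lemma finiteIndex_and_index_le_of_separated {H : Subgroup G} {M : ℕ}
    (hM : ∀ P : Finset G, (P : Set G).Pairwise (fun x y => x⁻¹ * y ∉ H) → #P ≤ M) :
    H.FiniteIndex ∧ H.index ≤ M := by
  obtain ⟨_, h_card⟩ := finite_and_natCard_le (β := G ⧸ H) (k := M) fun s => by
    rw [← card_map ⟨Quotient.out, Quotient.out_injective⟩]
    refine hM _ ?_
    rw [coe_map]
    rintro _ ⟨x, -, rfl⟩ _ ⟨y, -, rfl⟩ h_ne h_mem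
    refine h_ne (congrArg Quotient.out ?_)
    simpa using QuotientGroup.eq.2 h_mem
  exact ⟨Subgroup.finiteIndex_of_finite_quotient, h_card⟩

lemma card_le_relIndex_of_separated {H K : Subgroup G} [(H.subgroupOf K).FiniteIndex]
    {P : Finset G} (hP : (P : Set G).Pairwise fun x y => x⁻¹ * y ∉ H) (hPK : (P : Set G) ⊆ K) :
    #P ≤ H.relIndex K := by
  rw [← Nat.card_eq_finsetCard]
  refine Nat.card_le_card_of_injective
    (fun x : P => (QuotientGroup.mk ⟨x, hPK x.2⟩ : K ⧸ H.subgroupOf K)) fun x y hxy => ?_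
  by_contra h_ne
  have h_mem : (x : G)⁻¹ * y ∈ H := QuotientGroup.eq (s := H.subgroupOf K).1 hxy
  exact hP x.2 y.2 (Subtype.coe_injective.ne h_ne) h_mem

end SeparatedSets

section FiniteGroups

open Finset

variable {G : Type*} [Group G] {α : G →* G}

lemma index_autCommutator_le [Finite G] (α : G →* G) :
    (autCommutator α ⊤).index ≤ (Function.fixedPoints α).ncard := by
  have h_preimage : displacement α ⁻¹' (autCommutator α ⊤ : Set G) = Set.univ :=
    Set.eq_univ_of_forall fun _ => displacement_mem_autCommutator α (Subgroup.mem_top _)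
  have h_card := ncard_preimage_displacement_le (α := α) (Set.toFinite _)
    (Set.toFinite (autCommutator α ⊤ : Set G))
  rw [h_preimage, Set.ncard_univ, ← Subgroup.index_mul_card (autCommutator α ⊤)] at h_card
  exact Nat.le_of_mul_le_mul_right h_card Nat.card_pos

lemma one_le_ncard_fixedPoints (h_fix : (Function.fixedPoints α).Finite) :
    1 ≤ (Function.fixedPoints α).ncard :=
  (Set.ncard_pos h_fix).2 ⟨1, map_one α⟩

lemma ncard_setOf_conj_eq_le [Finite G] (a b : G) :
    {g : G | g * a * g⁻¹ = b}.ncard ≤ Nat.card (Subgroup.centralizer {a}) := by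
  rcases Set.eq_empty_or_nonempty {g : G | g * a * g⁻¹ = b} with h_empty | ⟨c, hc⟩
  · simp [h_empty]
  · calc {g : G | g * a * g⁻¹ = b}.ncard
        ≤ (c • (Subgroup.centralizer {a} : Set G)).ncard :=
          Set.ncard_le_ncard fun g hg => (mem_leftCoset_iff c).2
            (conj_eq_conj_iff_mem_centralizer.1 (hc.trans hg.symm))
      _ = Nat.card (Subgroup.centralizer {a}) := Set.ncard_smul_set _ _

lemma card_smul_inter_smul_le [Finite G] [DecidableEq G] {S : Finset G}
    (hS : ∀ s ∈ S, α s = s⁻¹) (x y : G) :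
    #(x • S ∩ y • S) ≤ Nat.card (Subgroup.centralizer {x⁻¹ * y}) := by
  rw [← Set.ncard_coe_finset]
  refine (Set.ncard_le_ncard_of_injOn (fun h => h⁻¹ * y) ?_ ?_).trans
    (ncard_setOf_conj_eq_le (x⁻¹ * y) (α (y⁻¹ * x)))
  · intro h hh
    rw [mem_coe, mem_inter, mem_smul_finset, mem_smul_finset] at hh
    obtain ⟨⟨s, hs, rfl⟩, t, ht, h_eq⟩ := hh
    have h_quot : y⁻¹ * x = t * s⁻¹ := by
      rw [eq_mul_inv_iff_mul_eq, mul_assoc, inv_mul_eq_iff_eq_mul]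
      exact h_eq.symm
    have h_y : y = x * s * t⁻¹ := by rw [eq_mul_inv_iff_mul_eq]; exact h_eq
    rw [Set.mem_ofPred_eq, h_quot, map_mul, map_inv, hS s hs, hS t ht, h_y, smul_eq_mul]
    group
  · intro h _ h' _ h_eq
    exact inv_injective (mul_right_cancel h_eq)

lemma card_le_of_pairwise_index_centralizer [Finite G] (hα : Function.Involutive α) {n : ℕ}
    (hn : (Function.fixedPoints α).ncard ≤ n) {P : Finset G}
    (hP : (P : Set G).Pairwise fun x y => 2 * n ^ 2 < (Subgroup.centralizer {x⁻¹ * y}).index) :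
    #P ≤ 2 * n := by
  classical
  have := Fintype.ofFinite G
  have h_fix := Set.toFinite (Function.fixedPoints α)
  set S : Finset G := univ.image (displacement α)
  have hS : ∀ s ∈ S, α s = s⁻¹ := fun s hs => by
    obtain ⟨g, -, rfl⟩ := mem_image.1 hs
    exact map_displacement hα g
  have hS_card : Fintype.card G ≤ n * #S := by
    have h_preimage : displacement α ⁻¹' S = Set.univ := Set.eq_univ_of_forall fun g =>
      mem_image_of_mem (displacement α) (mem_univ g)
    have h_card := ncard_preimage_displacement_le h_fix S.finite_toSet
    rw [h_preimage, Set.ncard_univ, Nat.card_eq_fintype_card, Set.ncard_coe_finset] at h_card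
    exact h_card.trans (Nat.mul_le_mul_right _ hn)
  refine (card_lt_of_pairwise_card_inter_le (A := fun x => x • S)
    ((one_le_ncard_fixedPoints h_fix).trans hn) (fun x _ => ?_) (hP.imp fun x y hxy => ?_)).le
  · rwa [card_smul_finset]
  · rw [← Nat.card_eq_fintype_card, ← Subgroup.index_mul_card (Subgroup.centralizer {x⁻¹ * y})]
    exact Nat.mul_le_mul hxy.le (card_smul_inter_smul_le hS x y)

lemma index_centralizer_apply (φ : G ≃* G) (a : G) :
    (Subgroup.centralizer {φ a}).index = (Subgroup.centralizer {a}).index := by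
  rw [← Subgroup.index_comap_of_surjective (Subgroup.centralizer {φ a}) (f := φ.toMonoidHom)
    φ.surjective]
  congr 1
  ext c
  simp [Subgroup.mem_centralizer_singleton_iff, ← map_mul]

lemma index_centralizer_le_pow [Finite G] {X : Set G} {c : ℕ}
    (hX : ∀ x ∈ X, (Subgroup.centralizer {x}).index ≤ c) (k : ℕ) :
    ∀ x ∈ X ^ k, (Subgroup.centralizer {x}).index ≤ c ^ k := by
  induction k with
  | zero =>
    intro x hx
    have h_top : Subgroup.centralizer {(1 : G)} = ⊤ := by
      simp [Subgroup.eq_top_iff', Subgroup.mem_centralizer_singleton_iff]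
    rw [pow_zero, Set.mem_one] at hx
    simp [hx, h_top]
  | succ k ih =>
    rintro _ ⟨a, ha, b, hb, rfl⟩
    calc (Subgroup.centralizer {a * b}).index
        ≤ (Subgroup.centralizer {a} ⊓ Subgroup.centralizer {b}).index :=
          Subgroup.index_antitone (centralizer_inf_centralizer_le_centralizer_mul a b)
      _ ≤ (Subgroup.centralizer {a}).index * (Subgroup.centralizer {b}).index :=
          Subgroup.index_inf_le
      _ ≤ c ^ (k + 1) := Nat.mul_le_mul (ih a ha) (hX b hb)

lemma exists_characteristic_index_centralizer_le [Finite G] (hα : Function.Involutive α) {n : ℕ}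
    (hn : (Function.fixedPoints α).ncard ≤ n) :
    ∃ F : Subgroup G, F.Characteristic ∧ F.index ≤ 2 * n ∧
      ∀ x ∈ F, (Subgroup.centralizer {x}).index ≤ (2 * n ^ 2) ^ 3 ^ (2 * n) := by
  set X : Set G := {x | (Subgroup.centralizer {x}).index ≤ 2 * n ^ 2}
  have hX_one : 1 ∈ X := by
    have h_pos := (one_le_ncard_fixedPoints (Set.toFinite (Function.fixedPoints α))).trans hn
    have h_index := index_centralizer_le_pow (X := X) (fun _ hx => hx) 0 1 (Set.one_mem_one)
    exact h_index.trans (by nlinarith)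
  have hX_inv : X⁻¹ = X := by
    ext x
    rw [Set.mem_inv, Set.mem_ofPred_eq, Set.mem_ofPred_eq, centralizer_singleton_inv]
  have hX_sep : ∀ P : Finset G, (P : Set G).Pairwise (fun x y => x⁻¹ * y ∉ X) → #P ≤ 2 * n :=
    fun P hP => card_le_of_pairwise_index_centralizer hα hn (hP.imp fun _ _ h => not_le.1 h)
  refine ⟨Subgroup.closure X, ?_, ?_, fun x hx => ?_⟩
  · refine Subgroup.characteristic_iff_map_le.2 fun φ => ?_
    rw [MonoidHom.map_closure]
    refine Subgroup.closure_mono ?_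
    rintro _ ⟨x, hx, rfl⟩
    exact (index_centralizer_apply φ x).trans_le hx
  · exact (finiteIndex_and_index_le_of_separated fun P hP =>
      hX_sep P (hP.imp fun _ _ h h_mem => h (Subgroup.subset_closure h_mem))).2
  · exact index_centralizer_le_pow (fun _ hx => hx) _ x
      (closure_subset_pow_of_separated hX_one hX_inv hX_sep hx)

end FiniteGroups

section NeumannTheorem

open Finset

variable {G : Type*} [Group G]

lemma exists_ncard_conjugatesOf_max {L : ℕ} (hL : ∀ a : G, (conjugatesOf a).ncard ≤ L) :
    ∃ a : G, ∀ b : G, (conjugatesOf b).ncard ≤ (conjugatesOf a).ncard := by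
  have h_bdd : BddAbove (Set.range fun a : G => (conjugatesOf a).ncard) :=
    ⟨L, Set.forall_mem_range.2 hL⟩
  obtain ⟨a, ha⟩ := Nat.sSup_mem (Set.range_nonempty _) h_bdd
  exact ⟨a, fun b => (le_csSup h_bdd (Set.mem_range_self b)).trans_eq ha.symm⟩

lemma conjugatesOf_mul_eq_smul {a c : G} {w : conjugatesOf a → G}
    (hw : ∀ b, w b * a * (w b)⁻¹ = b) (hc : ∀ b, Commute c (w b))
    (h_fin : (conjugatesOf (c * a)).Finite)
    (h_max : (conjugatesOf (c * a)).ncard ≤ (conjugatesOf a).ncard) :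
    conjugatesOf (c * a) = c • conjugatesOf a := by
  refine (Set.eq_of_subset_of_ncard_le ?_ (by rwa [Set.ncard_smul_set]) h_fin).symm
  rintro _ ⟨b, hb, rfl⟩
  refine isConj_iff.2 ⟨w ⟨b, hb⟩, ?_⟩
  rw [← mul_assoc, ← (hc _).eq, mul_assoc c, mul_assoc c, hw]
  rfl

lemma exists_conjugatesOf_mul_eq_smul (h_fin : ∀ a : G, (conjugatesOf a).Finite) {L : ℕ}
    (hL : ∀ a : G, (conjugatesOf a).ncard ≤ L) :
    ∃ (a : G) (C : Subgroup G), C.FiniteIndex ∧ C.index ≤ L ^ L ∧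
      ∀ c ∈ C, conjugatesOf (c * a) = c • conjugatesOf a := by
  obtain ⟨a, ha⟩ := exists_ncard_conjugatesOf_max hL
  choose w hw using fun b : conjugatesOf a => isConj_iff.1 b.2
  have : Fintype (conjugatesOf a) := (h_fin a).fintype
  have : ∀ b, (Subgroup.centralizer {w b}).FiniteIndex := fun b =>
    finite_conjugatesOf_iff.1 (h_fin _)
  have hL_pos : 0 < L := (ncard_conjugatesOf_pos (h_fin a)).trans_le (hL a)
  refine ⟨a, ⨅ b, Subgroup.centralizer {w b}, Subgroup.finiteIndex_iInf this, ?_, fun c hc => ?_⟩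
  · calc (⨅ b, Subgroup.centralizer {w b}).index
        ≤ ∏ b, (Subgroup.centralizer {w b}).index := Subgroup.index_iInf_le _
      _ ≤ L ^ Fintype.card (conjugatesOf a) := prod_le_pow_card _ _ L fun b _ =>
          (index_centralizer_eq_ncard_conjugatesOf (w b)).trans_le (hL _)
      _ ≤ L ^ L := Nat.pow_le_pow_right hL_pos <| by
          rw [← Nat.card_eq_fintype_card]; exact hL a
  · refine conjugatesOf_mul_eq_smul hw (fun b => ?_) (h_fin _) (ha _)
    exact (Subgroup.mem_centralizer_singleton_iff.1 (Subgroup.mem_iInf.1 hc b))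

lemma commutatorElement_mem_of_conjugatesOf_mul_eq_smul {a c : G}
    (hc : conjugatesOf (c⁻¹ * a) = c⁻¹ • conjugatesOf a) (h : G) :
    ⁅c, h⁆ ∈ conjugatesOf a * (conjugatesOf a)⁻¹ := by
  have h_conj : h * (c⁻¹ * a) * h⁻¹ ∈ c⁻¹ • conjugatesOf a := hc ▸ isConj_iff.2 ⟨h, rfl⟩
  refine ⟨_, Set.mem_inv_smul_set_iff.1 h_conj, (h * a * h⁻¹)⁻¹,
    Set.inv_mem_inv.2 (isConj_iff.2 ⟨h, rfl⟩), ?_⟩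
  rw [smul_eq_mul, commutatorElement_def]
  group

lemma commutatorSet_subset_iUnion {C : Subgroup G} {Q : Set G}
    (hQ : ∀ c ∈ C, ∀ h, ⁅c, h⁆ ∈ Q) :
    commutatorSet G ⊆ ⋃ q : G ⧸ C, q.out • (Q * conjugatesOf q.out⁻¹) := by
  rintro _ ⟨g, h, rfl⟩
  set t : G := (g : G ⧸ C).out
  have h_mem : t⁻¹ * g ∈ C := QuotientGroup.eq.1 (QuotientGroup.out_eq' _)
  refine Set.mem_iUnion.2 ⟨g, _, Set.mul_mem_mul (hQ _ h_mem h) (isConj_iff.2 ⟨h, rfl⟩), ?_⟩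
  change t * (⁅t⁻¹ * g, h⁆ * (h * t⁻¹ * h⁻¹)) = ⁅g, h⁆
  rw [commutatorElement_def, commutatorElement_def]
  group

lemma finite_commutatorSet_and_ncard_le (h_fin : ∀ a : G, (conjugatesOf a).Finite) {L : ℕ}
    (hL : ∀ a : G, (conjugatesOf a).ncard ≤ L) :
    (commutatorSet G).Finite ∧ (commutatorSet G).ncard ≤ L ^ L * (L * L * L) := by
  obtain ⟨a, C, hC_fin, hC_index, hC⟩ := exists_conjugatesOf_mul_eq_smul h_fin hL
  set Q := conjugatesOf a * (conjugatesOf a)⁻¹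
  have hQ : Q.ncard ≤ L * L := by
    refine Set.natCard_mul_le.trans (Nat.mul_le_mul (hL a) ?_)
    rw [Set.natCard_inv]
    exact hL a
  have h_sub : commutatorSet G ⊆ ⋃ q : G ⧸ C, q.out • (Q * conjugatesOf q.out⁻¹) :=
    commutatorSet_subset_iUnion fun c hc =>
      commutatorElement_mem_of_conjugatesOf_mul_eq_smul (hC _ (C.inv_mem hc))
  have h_union : (⋃ q : G ⧸ C, q.out • (Q * conjugatesOf q.out⁻¹)).Finite :=
    Set.finite_iUnion fun q => (((h_fin a).mul (h_fin a).inv).mul (h_fin _)).smul_set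
  refine ⟨h_union.subset h_sub, ?_⟩
  have := C.fintypeQuotientOfFiniteIndex
  calc (commutatorSet G).ncard
      ≤ (⋃ q ∈ (univ : Finset (G ⧸ C)), q.out • (Q * conjugatesOf q.out⁻¹)).ncard := by
        simpa only [mem_univ, Set.iUnion_true] using Set.ncard_le_ncard h_sub h_union
    _ ≤ ∑ q : G ⧸ C, (q.out • (Q * conjugatesOf q.out⁻¹)).ncard := set_ncard_biUnion_le _ _
    _ ≤ #(univ : Finset (G ⧸ C)) * (L * L * L) := sum_le_card_nsmul _ _ _ fun q _ => by
        rw [Set.ncard_smul_set]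
        exact Set.natCard_mul_le.trans (Nat.mul_le_mul hQ (hL _))
    _ ≤ L ^ L * (L * L * L) := by
        rw [card_univ, ← Nat.card_eq_fintype_card]
        exact Nat.mul_le_mul_right _ hC_index

lemma cardCommutatorBound_le_cardCommutatorBound {k l : ℕ} (hk : 0 < k) (hkl : k ≤ l) :
    Subgroup.cardCommutatorBound k ≤ Subgroup.cardCommutatorBound l := by
  unfold Subgroup.cardCommutatorBound
  have hl : 0 < l := hk.trans_le hkl
  gcongr
  exact Nat.one_le_pow _ _ hl

/-- The bound on the order of the derived subgroup in Neumann's theorem, for a group whose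
conjugacy classes have at most `L` elements; such a group has at most `L ^ L * L ^ 3`
commutators. -/
def neumannBound (L : ℕ) : ℕ := Subgroup.cardCommutatorBound (L ^ L * (L * L * L))

theorem card_commutator_le_neumannBound (h_fin : ∀ a : G, (conjugatesOf a).Finite) {L : ℕ}
    (hL : ∀ a : G, (conjugatesOf a).ncard ≤ L) : Nat.card (commutator G) ≤ neumannBound L := by
  obtain ⟨h_comm_fin, h_comm_card⟩ := finite_commutatorSet_and_ncard_le h_fin hL
  have := h_comm_fin.to_subtype
  have : Nonempty (commutatorSet G) := ⟨1, one_mem_commutatorSet G⟩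
  exact (Subgroup.card_commutator_le_of_finite_commutatorSet G).trans
    (cardCommutatorBound_le_cardCommutatorBound Nat.card_pos h_comm_card)

lemma card_commutator_self_le_neumannBound [Finite G] {K : Subgroup G} {L : ℕ}
    (hL : ∀ x ∈ K, (Subgroup.centralizer {x}).index ≤ L) : Nat.card ↥⁅K, K⁆ ≤ neumannBound L := by
  rw [← Subgroup.map_subtype_commutator, Subgroup.card_map_of_injective K.subtype_injective]
  refine card_commutator_le_neumannBound (fun _ => Set.toFinite _) fun x => ?_
  calc (conjugatesOf x).ncard = (Subgroup.centralizer {x}).index :=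
        (index_centralizer_eq_ncard_conjugatesOf x).symm
    _ ≤ (Subgroup.centralizer {(x : G)}).relIndex K :=
        Subgroup.index_antitone (centralizer_subgroupOf_le x)
    _ ≤ (Subgroup.centralizer {(x : G)}).relIndex ⊤ := Subgroup.relIndex_le_of_le_right le_top <| by
        rw [Subgroup.relIndex_top_right]; exact Subgroup.index_ne_zero_of_finite
    _ ≤ L := by rw [Subgroup.relIndex_top_right]; exact hL x x.2

end NeumannTheorem

section Restriction

variable {G : Type*} [Group G] {α : G →* G}

/-- The restriction of an endomorphism to an invariant subgroup, as an endomorphism of it. -/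
def invariantRestrict (α : G →* G) {H : Subgroup G} (hH : H ≤ H.comap α) : H →* H :=
  (α.domRestrict H).codRestrict H fun h => hH h.2

variable {H : Subgroup G} {hH : H ≤ H.comap α}

lemma involutive_invariantRestrict (hα : Function.Involutive α) :
    Function.Involutive (invariantRestrict α hH) :=
  fun h => Subtype.ext (hα h)

lemma mapsTo_coe_fixedPoints_invariantRestrict :
    Set.MapsTo ((↑) : H → G) (Function.fixedPoints (invariantRestrict α hH))
      (Function.fixedPoints α) :=
  fun _ hh => congrArg Subtype.val hh

lemma finite_fixedPoints_invariantRestrict (h_fix : (Function.fixedPoints α).Finite) :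
    (Function.fixedPoints (invariantRestrict α hH)).Finite :=
  .of_injOn mapsTo_coe_fixedPoints_invariantRestrict Subtype.val_injective.injOn h_fix

lemma ncard_fixedPoints_invariantRestrict_le (h_fix : (Function.fixedPoints α).Finite) :
    (Function.fixedPoints (invariantRestrict α hH)).ncard ≤ (Function.fixedPoints α).ncard :=
  Set.ncard_le_ncard_of_injOn _ mapsTo_coe_fixedPoints_invariantRestrict
    Subtype.val_injective.injOn h_fix

end Restriction

section CommutativeSubgroup

variable {G : Type*} [Group G] {α : G →* G}

lemma exists_inverted_subgroup (hα : Function.Involutive α)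
    (h_fix : (Function.fixedPoints α).Finite) {A : Subgroup G} [IsMulCommutative A]
    (hA : A ≤ A.comap α) :
    ∃ B : Subgroup G, (∀ b ∈ B, α b = b⁻¹) ∧
      B.index ≤ (Function.fixedPoints α).ncard * A.index := by
  set β : A →* A := invariantRestrict α hA
  set φ : A →* A := MonoidHom.id A * β
  refine ⟨φ.ker.map A.subtype, ?_, ?_⟩
  · rintro _ ⟨a, ha, rfl⟩
    have h_mul : a * β a = 1 := ha
    exact congrArg Subtype.val (inv_eq_of_mul_eq_one_right h_mul).symm
  · rw [Subgroup.index_map_subtype, Subgroup.index_ker]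
    refine Nat.mul_le_mul_right _
      (le_trans ?_ (ncard_fixedPoints_invariantRestrict_le (hH := hA) h_fix))
    refine Set.ncard_le_ncard ?_ (finite_fixedPoints_invariantRestrict h_fix)
    rintro _ ⟨a, rfl⟩
    change β (a * β a) = a * β a
    rw [map_mul, involutive_invariantRestrict hα, mul_comm]

lemma autCommutator_top_le_centralizer {N : Subgroup G} [N.Normal] (hN : ∀ b ∈ N, α b = b⁻¹) :
    autCommutator α ⊤ ≤ Subgroup.centralizer N := by
  refine (Subgroup.closure_le _).2 ?_
  rintro _ ⟨g, -, rfl⟩ b hb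
  have h_conj : α g * b⁻¹ * (α g)⁻¹ = g * b⁻¹ * g⁻¹ := by
    have := hN _ (Subgroup.Normal.conj_mem ‹_› b hb g)
    simpa [hN b hb, mul_assoc] using this
  have h_conj' : α g * b * (α g)⁻¹ = g * b * g⁻¹ := by
    simpa [mul_assoc] using congrArg (·⁻¹) h_conj
  calc b * displacement α g = g⁻¹ * (g * b * g⁻¹) * α g := by rw [displacement]; group
    _ = displacement α g * b := by rw [← h_conj', displacement]; group

lemma index_normalCore_le_factorial (H : Subgroup G) [H.FiniteIndex] :
    H.normalCore.index ≤ H.index.factorial := by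
  rw [H.normalCore_eq_ker, Subgroup.index_ker]
  exact (Subgroup.card_le_card_group _).trans_eq Nat.card_perm

lemma card_commutator_autCommutator_le_of_commutative [Finite G] (hα : Function.Involutive α)
    {n M : ℕ} (hn : (Function.fixedPoints α).ncard ≤ n) {A : Subgroup G} [IsMulCommutative A]
    (hA : A ≤ A.comap α) (hM : A.index ≤ M) :
    Nat.card ↥⁅autCommutator α ⊤, autCommutator α ⊤⁆ ≤ neumannBound (n * M).factorial := by
  obtain ⟨B, hB, hB_index⟩ := exists_inverted_subgroup hα (Set.toFinite _) hA
  have h_central : autCommutator α ⊤ ≤ Subgroup.centralizer B.normalCore :=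
    autCommutator_top_le_centralizer fun b hb => hB b (B.normalCore_le hb)
  refine card_commutator_self_le_neumannBound fun x hx => ?_
  calc (Subgroup.centralizer {x}).index
      ≤ B.normalCore.index := Subgroup.index_antitone fun b hb =>
        Subgroup.mem_centralizer_singleton_iff.2 (h_central hx b hb)
    _ ≤ B.index.factorial := index_normalCore_le_factorial B
    _ ≤ (n * M).factorial :=
        Nat.factorial_le (hB_index.trans (Nat.mul_le_mul hn hM))

end CommutativeSubgroup

section FiniteTheorem

variable {G : Type*} [Group G] {α : G →* G}

lemma ncard_fixedPoints_quotientMap_le (h_fix : (Function.fixedPoints α).Finite)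
    {D : Subgroup G} [D.Normal] [Finite D] (hD : D ≤ D.comap α) :
    (Function.fixedPoints (QuotientGroup.map D D α hD)).ncard ≤
      (Function.fixedPoints α).ncard * Nat.card D := by
  have hD_fin := Set.toFinite (D : Set G)
  refine le_trans ?_ (ncard_preimage_displacement_le h_fix hD_fin)
  have h_sub : Function.fixedPoints (QuotientGroup.map D D α hD) ⊆
      QuotientGroup.mk '' (displacement α ⁻¹' D) := by
    intro q hq
    obtain ⟨g, rfl⟩ := QuotientGroup.mk_surjective q
    exact ⟨g, QuotientGroup.eq.1 (Eq.symm hq), rfl⟩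
  have h_preimage := finite_preimage_displacement h_fix hD_fin
  exact (Set.ncard_le_ncard h_sub (h_preimage.image _)).trans (Set.ncard_image_le h_preimage)

lemma card_le_card_ker_mul_card_map {Q : Type*} [Group Q] (f : G →* Q) [Finite f.ker]
    (H : Subgroup G) : Nat.card H ≤ Nat.card f.ker * Nat.card (H.map f) := by
  calc Nat.card H = Nat.card ↥(f.ker ⊓ H) * (f.ker ⊓ H).relIndex H := by
        rw [← Subgroup.relIndex_bot_left, ← Subgroup.relIndex_bot_left,
          Subgroup.relIndex_mul_relIndex ⊥ (f.ker ⊓ H) H bot_le inf_le_right]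
    _ = Nat.card ↥(f.ker ⊓ H) * Nat.card (H.map f) := by
        rw [Subgroup.inf_relIndex_right, Subgroup.relIndex_ker]
    _ ≤ Nat.card f.ker * Nat.card (H.map f) :=
        Nat.mul_le_mul_right _ (Nat.card_mono (Set.toFinite (f.ker : Set G)) inf_le_left)

lemma card_commutator_autCommutator_le_mul {D : Subgroup G} [D.Normal] [Finite D]
    (hD : D ≤ D.comap α) :
    Nat.card ↥⁅autCommutator α ⊤, autCommutator α ⊤⁆ ≤
      Nat.card D * Nat.card ↥⁅autCommutator (QuotientGroup.map D D α hD) ⊤,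
        autCommutator (QuotientGroup.map D D α hD) ⊤⁆ := by
  have : Finite (QuotientGroup.mk' D).ker := by rwa [QuotientGroup.ker_mk']
  have h_card := card_le_card_ker_mul_card_map (QuotientGroup.mk' D)
    ⁅autCommutator α ⊤, autCommutator α ⊤⁆
  rwa [QuotientGroup.ker_mk', Subgroup.map_commutator,
    map_autCommutator (f := QuotientGroup.mk' D) (β := QuotientGroup.map D D α hD) fun _ => rfl,
    Subgroup.map_top_of_surjective _ (QuotientGroup.mk'_surjective D)] at h_card

lemma involutive_quotientMap (hα : Function.Involutive α) {D : Subgroup G} [D.Normal]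
    (hD : D ≤ D.comap α) : Function.Involutive (QuotientGroup.map D D α hD) :=
  (QuotientGroup.mk'_surjective D).forall.2 fun g => congrArg (QuotientGroup.mk' D) (hα g)

lemma le_comap_of_characteristic {F : Subgroup G} [hF : F.Characteristic]
    (hα : Function.Involutive α) : F ≤ F.comap α :=
  (hF.fixed (MulEquiv.ofBijective α hα.bijective)).ge

/-- The bound on the order of the derived subgroup of `[G, α]`, for an involutory automorphism `α`
with at most `n` fixed points. Here `N` bounds the order of the derived subgroup of the
characteristic subgroup of index at most `2 * n`, and `n * N` the number of fixed points modulo that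
derived subgroup. -/
def derivedBound (n : ℕ) : ℕ :=
  let N := neumannBound ((2 * n ^ 2) ^ 3 ^ (2 * n))
  N * neumannBound (n * N * (2 * n)).factorial

theorem card_commutator_autCommutator_le_of_finite [Finite G] (hα : Function.Involutive α)
    {n : ℕ} (hn : (Function.fixedPoints α).ncard ≤ n) :
    Nat.card ↥⁅autCommutator α ⊤, autCommutator α ⊤⁆ ≤ derivedBound n := by
  obtain ⟨F, hF_char, hF_index, hF⟩ := exists_characteristic_index_centralizer_le hα hn
  set N := neumannBound ((2 * n ^ 2) ^ 3 ^ (2 * n))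
  have hD_card : Nat.card ↥⁅F, F⁆ ≤ N := card_commutator_self_le_neumannBound hF
  have hD_inv := le_comap_of_characteristic (F := ⁅F, F⁆) hα
  set π := QuotientGroup.mk' ⁅F, F⁆
  set β := QuotientGroup.map ⁅F, F⁆ ⁅F, F⁆ α hD_inv
  have hβ_fix : (Function.fixedPoints β).ncard ≤ n * N :=
    (ncard_fixedPoints_quotientMap_le (Set.toFinite _) hD_inv).trans (Nat.mul_le_mul hn hD_card)
  have hFπ_comm : IsMulCommutative (F.map π) := by
    rw [← Subgroup.commutator_self_eq_bot_iff, ← Subgroup.map_commutator,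
      QuotientGroup.map_mk'_self]
  have hFπ_inv : F.map π ≤ (F.map π).comap β := by
    rintro _ ⟨x, hx, rfl⟩
    exact ⟨α x, le_comap_of_characteristic hα hx, rfl⟩
  have hFπ_index : (F.map π).index ≤ 2 * n :=
    (Nat.le_of_dvd (Nat.pos_of_ne_zero Subgroup.index_ne_zero_of_finite)
      (F.index_map_dvd (QuotientGroup.mk'_surjective _))).trans hF_index
  exact (card_commutator_autCommutator_le_mul hD_inv).trans <| Nat.mul_le_mul hD_card <|
    card_commutator_autCommutator_le_of_commutative (involutive_quotientMap hα hD_inv) hβ_fix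
      hFπ_inv hFπ_index

end FiniteTheorem

section LocalToGlobal

open Finset

variable {G : Type*} [Group G] {α : G →* G}

lemma eventually_mem_of_mem_closure {ι : Type*} {l : Filter ι} {K : ι → Subgroup G} {s : Set G}
    (hs : ∀ x ∈ s, ∀ᶠ i in l, x ∈ K i) {x : G} (hx : x ∈ Subgroup.closure s) :
    ∀ᶠ i in l, x ∈ K i := by
  induction hx using Subgroup.closure_induction with
  | mem x hx => exact hs x hx
  | one => exact Eventually.of_forall fun i => (K i).one_mem
  | mul x y _ _ hx hy => exact (hx.and hy).mono fun i h => (K i).mul_mem h.1 h.2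
  | inv x _ hx => exact hx.mono fun i h => (K i).inv_mem h

/-- The subgroup generated by a finite set and its image under `α`. For involutive `α` it is the
least `α`-invariant subgroup containing the set. -/
def invariantClosure (α : G →* G) (T : Finset G) : Subgroup G :=
  Subgroup.closure (T ∪ α '' T)

lemma subset_invariantClosure (T : Finset G) : (T : Set G) ⊆ invariantClosure α T :=
  Set.subset_union_left.trans Subgroup.subset_closure

lemma invariantClosure_le_comap (hα : Function.Involutive α) (T : Finset G) :
    invariantClosure α T ≤ (invariantClosure α T).comap α := by
  rw [← Subgroup.map_le_iff_le_comap, invariantClosure, MonoidHom.map_closure, Set.image_union,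
    Set.image_image]
  simp only [hα _, Set.image_id', Set.union_comm, le_refl]

lemma finite_invariantClosure (hα : Function.Involutive α)
    (h_fix : (Function.fixedPoints α).Finite) {e : ℕ}
    (h_exp : ∀ g : G, ∃ q, Odd q ∧ g ^ (2 ^ e * q) = 1) (T : Finset G) :
    Finite (invariantClosure α T) := by
  have : Group.FG (invariantClosure α T) := (Group.fg_iff_subgroup_fg _).2 <|
    (Subgroup.fg_iff _).2 ⟨_, rfl, T.finite_toSet.union (T.finite_toSet.image _)⟩
  have : (fcCenter (invariantClosure α T)).FiniteIndex :=
    finiteIndex_fcCenter (involutive_invariantRestrict (hH := invariantClosure_le_comap hα T) hα)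
      (finite_fixedPoints_invariantRestrict h_fix) fun h => by
        simpa [Subtype.ext_iff] using h_exp h
  exact finite_of_fg_of_finiteIndex_fcCenter ((isMulTorsion_of_odd h_exp).subgroup _)

lemma eventually_mem_autCommutator {x : G} (hx : x ∈ autCommutator α ⊤) :
    ∀ᶠ T in atTop, x ∈ autCommutator α (invariantClosure α T) := by
  refine eventually_mem_of_mem_closure ?_ hx
  rintro _ ⟨g, -, rfl⟩
  filter_upwards [eventually_ge_atTop {g}] with T hT
  exact displacement_mem_autCommutator α
    (subset_invariantClosure T (singleton_subset_iff.1 hT))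

lemma eventually_mem_commutator_autCommutator {x : G}
    (hx : x ∈ ⁅autCommutator α ⊤, autCommutator α ⊤⁆) :
    ∀ᶠ T in atTop, x ∈ ⁅autCommutator α (invariantClosure α T),
      autCommutator α (invariantClosure α T)⁆ := by
  refine eventually_mem_of_mem_closure ?_ hx
  rintro _ ⟨a, ha, b, hb, rfl⟩
  filter_upwards [eventually_mem_autCommutator ha, eventually_mem_autCommutator hb] with T haT hbT
  exact Subgroup.commutator_mem_commutator haT hbT

lemma map_subtype_autCommutator {H : Subgroup G} (hH : H ≤ H.comap α) :
    (autCommutator (invariantRestrict α hH) ⊤).map H.subtype = autCommutator α H := by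
  rw [map_autCommutator (f := H.subtype) (β := α) fun _ => rfl, ← MonoidHom.range_eq_map,
    H.range_subtype]

lemma autCommutator_mono {H K : Subgroup G} (hHK : H ≤ K) :
    autCommutator α H ≤ autCommutator α K :=
  Subgroup.closure_mono (Set.image_mono hHK)

lemma relIndex_autCommutator_le {H : Subgroup G} [Finite H] (hH : H ≤ H.comap α)
    (h_fix : (Function.fixedPoints α).Finite) :
    (autCommutator α ⊤).relIndex H ≤ (Function.fixedPoints α).ncard := by
  have h_le : autCommutator (invariantRestrict α hH) ⊤ ≤ (autCommutator α ⊤).subgroupOf H := by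
    rw [Subgroup.subgroupOf, ← Subgroup.map_le_iff_le_comap, map_subtype_autCommutator]
    exact autCommutator_mono le_top
  calc (autCommutator α ⊤).relIndex H
      ≤ (autCommutator (invariantRestrict α hH) ⊤).index := Subgroup.index_antitone h_le
    _ ≤ (Function.fixedPoints (invariantRestrict α hH)).ncard := index_autCommutator_le _
    _ ≤ (Function.fixedPoints α).ncard := ncard_fixedPoints_invariantRestrict_le h_fix

lemma card_commutator_autCommutator_le_of_finite_subgroup (hα : Function.Involutive α)
    (h_fix : (Function.fixedPoints α).Finite) {n : ℕ} (hn : (Function.fixedPoints α).ncard ≤ n)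
    {H : Subgroup G} [Finite H] (hH : H ≤ H.comap α) :
    Nat.card ↥⁅autCommutator α H, autCommutator α H⁆ ≤ derivedBound n := by
  rw [← map_subtype_autCommutator hH, ← Subgroup.map_commutator,
    Subgroup.card_map_of_injective H.subtype_injective]
  exact card_commutator_autCommutator_le_of_finite (involutive_invariantRestrict hα)
    ((ncard_fixedPoints_invariantRestrict_le h_fix).trans hn)

lemma autCommutator_le {H : Subgroup G} (hH : H ≤ H.comap α) : autCommutator α H ≤ H :=
  (Subgroup.closure_le H).2 <| by
    rintro _ ⟨g, hg, rfl⟩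
    exact H.mul_mem (H.inv_mem hg) (hH hg)

theorem finiteIndex_and_index_autCommutator_le (hα : Function.Involutive α)
    (h_fix : (Function.fixedPoints α).Finite) {e : ℕ}
    (h_exp : ∀ g : G, ∃ q, Odd q ∧ g ^ (2 ^ e * q) = 1) :
    (autCommutator α ⊤).FiniteIndex ∧
      (autCommutator α ⊤).index ≤ (Function.fixedPoints α).ncard :=
  finiteIndex_and_index_le_of_separated fun T hT =>
    have := finite_invariantClosure hα h_fix h_exp T
    (card_le_relIndex_of_separated hT (subset_invariantClosure T)).trans
      (relIndex_autCommutator_le (invariantClosure_le_comap hα T) h_fix)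

theorem finite_and_card_commutator_autCommutator_le (hα : Function.Involutive α)
    (h_fix : (Function.fixedPoints α).Finite) {e : ℕ}
    (h_exp : ∀ g : G, ∃ q, Odd q ∧ g ^ (2 ^ e * q) = 1) {n : ℕ}
    (hn : (Function.fixedPoints α).ncard ≤ n) :
    Finite ↥⁅autCommutator α ⊤, autCommutator α ⊤⁆ ∧
      Nat.card ↥⁅autCommutator α ⊤, autCommutator α ⊤⁆ ≤ derivedBound n := by
  refine finite_and_natCard_le fun s => ?_
  obtain ⟨T, hT⟩ := ((eventually_all_finset s).2 fun x _ =>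
    eventually_mem_commutator_autCommutator x.2).exists
  have := finite_invariantClosure hα h_fix h_exp T
  have hT_inv := invariantClosure_le_comap hα T
  set K := ⁅autCommutator α (invariantClosure α T), autCommutator α (invariantClosure α T)⁆
  have hK_fin : (K : Set G).Finite := (Set.toFinite (invariantClosure α T : Set G)).subset <|
    (Subgroup.commutator_le_self _).trans (autCommutator_le hT_inv)
  calc #s = #(s.map (Function.Embedding.subtype _)) := (card_map _).symm
    _ = ((s.map (Function.Embedding.subtype _) : Finset G) : Set G).ncard :=
        (Set.ncard_coe_finset _).symm
    _ ≤ (K : Set G).ncard := Set.ncard_le_ncard (by simpa [Set.subset_def] using hT) hK_fin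
    _ ≤ derivedBound n := card_commutator_autCommutator_le_of_finite_subgroup hα h_fix hn hT_inv

end LocalToGlobal

theorem bounded_exponent_involutory_automorphism_commutator_derived_bounded_general :
    ∃ f : ℕ → ℕ, ∀ (n e : ℕ) (G : Type*) [Group G],
      (∀ g : G, ∃ q, Odd q ∧ g ^ (2 ^ e * q) = 1) →
      ∀ α : G →* G, Function.Involutive α →
      (Function.fixedPoints α).Finite → (Function.fixedPoints α).ncard ≤ n →
      ((autCommutator α ⊤).FiniteIndex ∧ (autCommutator α ⊤).index ≤ n) ∧
        Finite ↥⁅autCommutator α ⊤, autCommutator α ⊤⁆ ∧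
        Nat.card ↥⁅autCommutator α ⊤, autCommutator α ⊤⁆ ≤ f n :=
  ⟨derivedBound, fun _ _ _ _ h_exp _ hα h_fix hn =>
    ⟨(finiteIndex_and_index_autCommutator_le hα h_fix h_exp).imp_right hn.trans',
      finite_and_card_commutator_autCommutator_le hα h_fix h_exp hn⟩⟩

/-- There is a function `f : ℕ × ℕ → ℕ` such that for any group `G` of exponent at most
`m` with an involutory automorphism `α` fixing at most `n` elements, the subgroup `[G, α]`
has index at most `n` and its derived subgroup has order at most `f (n, m)`. -/
theorem bounded_exponent_involutory_automorphism_commutator_derived_bounded :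
    ∃ f : ℕ × ℕ → ℕ, ∀ n m : ℕ, 1 ≤ m → ∀ (G : Type) [Group G],
      (∀ g : G, g ^ m = 1) →
      ∀ α : G ≃* G, (∀ g, α (α g) = g) →
      {g : G | α g = g}.Finite → {g : G | α g = g}.ncard ≤ n →
      (Subgroup.closure {x : G | ∃ g : G, g⁻¹ * α g = x}).index ≤ n ∧
      Nat.card ↥⁅Subgroup.closure {x : G | ∃ g : G, g⁻¹ * α g = x},
                 Subgroup.closure {x : G | ∃ g : G, g⁻¹ * α g = x}⁆ ≤ f (n, m) := by
  obtain ⟨f, hf⟩ := bounded_exponent_involutory_automorphism_commutator_derived_bounded_general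
  refine ⟨fun p => f p.1, fun n m hm G _ h_exp α hα h_fix hn => ?_⟩
  obtain ⟨e, q, hq, rfl⟩ := Nat.exists_eq_two_pow_mul_odd (Nat.one_le_iff_ne_zero.1 hm)
  have h_closure : Subgroup.closure {x : G | ∃ g : G, g⁻¹ * α g = x} =
      autCommutator α.toMonoidHom ⊤ := by
    rw [autCommutator, Subgroup.coe_top, Set.image_univ]
    rfl
  obtain ⟨⟨-, h_index⟩, -, h_card⟩ :=
    hf n e G (fun g => ⟨q, hq, h_exp g⟩) α.toMonoidHom hα h_fix hn
  exact h_closure ▸ ⟨h_index, h_card⟩
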